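/- Let β, α ∈ ℝ with β ∈ Ξ ∪ {0}, α ∈ Ξ, β < α, and (β, α) ∩ Ξ = ∅ (so that the open interval (β, α) is a connected component of (0, 1/2) ∖ Ξ). Then there exist integers n ≥ 2 and p ≥ 1 such that α = p/(2ⁿ − 1) and β = p/2ⁿ. -/

import Mathlib

/-- The set `Ξ` of Head's angles: angles `θ ∈ (0, 1/2]` with `2^k θ ∈ [θ, 1] (mod ℤ)`
for all `k ≥ 0`. -/
def HeadXi : Set ℝ :=
  {θ : ℝ | 0 < θ ∧ θ ≤ 1/2 ∧ ∀ k : ℕ, ∃ n : ℤ, θ ≤ 2 ^ k * θ - n ∧ 2 ^ k * θ - n ≤ 1}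

/-!
For `θ ∈ (0, 1/2]`, the condition `2 ^ k * θ ∈ [θ, 1] (mod ℤ)` fails exactly when
`p < 2 ^ k * θ < p + θ` for some natural number `p`, that is, when `θ` lies in the interval
`(p / 2 ^ k, p / (2 ^ k - 1))`. So `Ξ` is obtained from `(0, 1/2]` by removing all these intervals.
If `θ` has been removed, take an interval of least level `k` that contains it: since `θ` satisfies
the conditions of lower level, *both* endpoints of that interval belong to `Ξ`. The interval is
therefore the connected component of `θ` in the complement of `Ξ`.
-/

section

open Set

/-- The interval of level `n` and index `p` that the condition on `2 ^ n * θ` in `HeadXi` removes.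
At level `0` it is empty, because its right endpoint is then `p / 0 = 0`. -/
def headGap (n p : ℕ) : Set ℝ := Ioo ((p : ℝ) / 2 ^ n) (p / (2 ^ n - 1))

variable {n p : ℕ} {θ : ℝ}

lemma notMem_headGap_zero_left : θ ∉ headGap 0 p := by
  rintro ⟨hl, hr⟩
  simp only [pow_zero, div_one, sub_self, div_zero] at hl hr
  linarith [p.cast_nonneg (α := ℝ)]

lemma pos_left_of_mem_headGap (h : θ ∈ headGap n p) : 0 < n :=
  Nat.pos_of_ne_zero fun h0 => notMem_headGap_zero_left (h0 ▸ h)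

lemma pos_right_of_mem_headGap (h : θ ∈ headGap n p) : 0 < p := by
  rcases p.eq_zero_or_pos with rfl | hp
  · simp [headGap] at h
  · exact hp

lemma pos_of_mem_headGap (h : θ ∈ headGap n p) : 0 < θ :=
  lt_of_le_of_lt (by positivity) h.1

lemma two_pow_sub_one_pos (hn : 0 < n) : (0 : ℝ) < 2 ^ n - 1 :=
  sub_pos.2 (one_lt_pow₀ one_lt_two hn.ne')

lemma mem_headGap_iff (hθ : θ ≤ 1) : θ ∈ headGap n p ↔ 2 ^ n * θ ∈ Ioo (p : ℝ) (p + θ) := by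
  rcases n.eq_zero_or_pos with rfl | hn
  · refine iff_of_false notMem_headGap_zero_left fun ⟨hl, hr⟩ => ?_
    have hp : p < 1 := by exact_mod_cast (by linarith : (p : ℝ) < 1)
    obtain rfl : p = 0 := by omega
    simp at hr
  · rw [headGap, mem_Ioo, mem_Ioo, div_lt_iff₀' (by positivity),
      lt_div_iff₀' (two_pow_sub_one_pos hn), sub_mul, one_mul, sub_lt_iff_lt_add]

lemma exists_int_le_sub_le_one_iff {x : ℝ} (hx : 0 < x) :
    (∃ m : ℤ, θ ≤ x - m ∧ x - m ≤ 1) ↔ ∀ q : ℕ, x ∉ Ioo (q : ℝ) (q + θ) := by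
  constructor
  · rintro ⟨m, hm, hm'⟩ q ⟨hq, hq'⟩
    have hlt : m < q := by exact_mod_cast (by linarith : (m : ℝ) < q)
    have hgt : (q : ℤ) < m + 1 := by exact_mod_cast (by linarith : (q : ℝ) < m + 1)
    omega
  · intro h
    obtain ⟨q, hq⟩ := Nat.exists_eq_succ_of_ne_zero (Nat.ceil_pos.2 hx).ne'
    obtain ⟨hlt, hle⟩ := (Nat.ceil_eq_iff q.succ_ne_zero).1 hq
    simp only [Nat.succ_eq_add_one, Nat.add_sub_cancel, Nat.cast_add, Nat.cast_one] at hlt hle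
    have hqθ : q + θ ≤ x := not_lt.1 fun hlt' => h q ⟨hlt, hlt'⟩
    exact ⟨q, by push_cast; linarith, by push_cast; linarith⟩

lemma mem_headXi_iff : θ ∈ HeadXi ↔ θ ∈ Ioc 0 (1 / 2) ∧ ∀ k q, θ ∉ headGap k q := by
  rw [HeadXi, mem_ofPred_eq, ← and_assoc, mem_Ioc]
  refine and_congr_right fun hθ => forall_congr' fun k => ?_
  have hpos : 0 < 2 ^ k * θ := mul_pos (by positivity) hθ.1
  simp only [mem_headGap_iff (show θ ≤ 1 by linarith [hθ.2])]
  exact exists_int_le_sub_le_one_iff hpos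

lemma two_mul_lt_two_pow_of_mem_headGap (h : θ ∈ headGap n p) (hθ : θ ≤ 1 / 2) :
    2 * p < 2 ^ n := by
  have hlt : (p : ℝ) / 2 ^ n < 1 / 2 := h.1.trans_le hθ
  rw [div_lt_div_iff₀ (by positivity) two_pos, one_mul] at hlt
  exact_mod_cast (mul_comm (p : ℝ) 2 ▸ hlt)

lemma two_le_of_mem_headGap (h : θ ∈ headGap n p) (hθ : θ ≤ 1 / 2) : 2 ≤ n := by
  have hlt : 2 ^ 1 < 2 ^ n := by
    linarith [two_mul_lt_two_pow_of_mem_headGap h hθ, pos_right_of_mem_headGap h]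
  exact (Nat.pow_lt_pow_iff_right one_lt_two).1 hlt

lemma headGap_right_le_half (h : θ ∈ headGap n p) (hθ : θ ≤ 1 / 2) :
    (p : ℝ) / (2 ^ n - 1) ≤ 1 / 2 := by
  have hle : 2 * (p : ℝ) + 1 ≤ 2 ^ n := by
    exact_mod_cast two_mul_lt_two_pow_of_mem_headGap h hθ
  rw [div_le_div_iff₀ (two_pow_sub_one_pos (pos_left_of_mem_headGap h)) two_pos]
  linarith

lemma two_pow_mul_headGap_right (hn : 0 < n) :
    2 ^ n * ((p : ℝ) / (2 ^ n - 1)) = p + p / (2 ^ n - 1) := by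
  have := (two_pow_sub_one_pos hn).ne'
  field_simp
  ring

lemma exists_mem_headGap_of_mem_headGap_add {j q : ℕ} (hθ : θ ≤ 1) (hper : 2 ^ n * θ = p + θ)
    (h : θ ∈ headGap (n + j) q) : ∃ r, θ ∈ headGap j r := by
  have hθ0 : 0 < θ := pos_of_mem_headGap h
  have hpow : 2 ^ (n + j) * θ = 2 ^ j * p + 2 ^ j * θ := by
    rw [pow_add, mul_right_comm, hper]
    ring
  rw [mem_headGap_iff hθ, hpow] at h
  have hj : θ ≤ 2 ^ j * θ := le_mul_of_one_le_left hθ0.le (one_le_pow₀ one_le_two)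
  have hle : 2 ^ j * p ≤ q := by exact_mod_cast (by linarith [h.2] : (2 : ℝ) ^ j * p ≤ q)
  obtain ⟨r, rfl⟩ := Nat.exists_eq_add_of_le hle
  push_cast at h
  exact ⟨r, (mem_headGap_iff hθ).2 ⟨by linarith [h.1], by linarith [h.2]⟩⟩

lemma headGap_right_notMem_headGap_of_lt {k q : ℕ} (hγ : (p : ℝ) / (2 ^ n - 1) ≤ 1)
    (h : θ ∈ headGap n p) (hkn : k < n) (hk : θ ∉ headGap k q) :
    (p : ℝ) / (2 ^ n - 1) ∉ headGap k q := by
  intro hγq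
  have hθq : θ ≤ q / 2 ^ k := not_lt.1 fun hlt => hk ⟨hlt, h.2.trans hγq.2⟩
  have hper := two_pow_mul_headGap_right (p := p) (pos_left_of_mem_headGap h)
  obtain ⟨hpθ, -⟩ := (mem_headGap_iff (h.2.le.trans hγ)).1 h
  obtain ⟨hqγ, -⟩ := (mem_headGap_iff hγ).1 hγq
  set γ : ℝ := p / (2 ^ n - 1)
  obtain ⟨i, rfl⟩ := Nat.exists_eq_add_of_le' hkn.le
  rw [pow_add, mul_assoc] at hpθ hper
  rw [le_div_iff₀' (by positivity)] at hθq
  have hlt : p < 2 ^ i * q := by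
    exact_mod_cast hpθ.trans_le (mul_le_mul_of_nonneg_left hθq (by positivity))
  have hgt : 2 ^ i * q < p + 1 := by
    have : (2 : ℝ) ^ i * q < 2 ^ i * (2 ^ k * γ) := mul_lt_mul_of_pos_left hqγ (by positivity)
    exact_mod_cast (by linarith : (2 : ℝ) ^ i * q < p + 1)
  omega

lemma headGap_right_mem_headXi (hθ : θ ≤ 1 / 2) (h : θ ∈ headGap n p)
    (hmin : ∀ k < n, ∀ q, θ ∉ headGap k q) : (p : ℝ) / (2 ^ n - 1) ∈ HeadXi := by
  have hn := pos_left_of_mem_headGap h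
  have hγ := headGap_right_le_half h hθ
  refine mem_headXi_iff.2 ⟨⟨(pos_of_mem_headGap h).trans h.2, hγ⟩, fun k => ?_⟩
  induction k using Nat.strong_induction_on with
  | h k ih =>
    intro q hq
    rcases lt_or_ge k n with hkn | hnk
    · exact headGap_right_notMem_headGap_of_lt (by linarith) h hkn (hmin k hkn q) hq
    · obtain ⟨j, rfl⟩ := Nat.exists_eq_add_of_le hnk
      obtain ⟨r, hr⟩ :=
        exists_mem_headGap_of_mem_headGap_add (by linarith) (two_pow_mul_headGap_right hn) hq
      exact ih j (by omega) r hr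

lemma headGap_left_notMem_headGap_of_le {k q : ℕ} (hδ : (p : ℝ) / 2 ^ n ≤ 1) (hnk : n ≤ k) :
    (p : ℝ) / 2 ^ n ∉ headGap k q := by
  rw [mem_headGap_iff hδ]
  rintro ⟨hlt, hgt⟩
  obtain ⟨j, rfl⟩ := Nat.exists_eq_add_of_le' hnk
  have hint : (2 : ℝ) ^ (j + n) * (p / 2 ^ n) = 2 ^ j * p := by
    rw [pow_add]
    field_simp
  rw [hint] at hlt hgt
  have hlt' : q < 2 ^ j * p := by exact_mod_cast hlt
  have hgt' : 2 ^ j * p < q + 1 := by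
    exact_mod_cast (by linarith : (2 : ℝ) ^ j * p < q + 1)
  omega

lemma headGap_left_notMem_headGap_of_lt {k q : ℕ} (hθ : θ ≤ 1) (h : θ ∈ headGap n p)
    (hmin : ∀ k < n, ∀ q, θ ∉ headGap k q) (hkn : k < n) : (p : ℝ) / 2 ^ n ∉ headGap k q := by
  intro hδq
  have hδθ := h.1
  have hδ : 2 ^ n * ((p : ℝ) / 2 ^ n) = p := mul_div_cancel₀ _ (by positivity)
  have hin : n - k < n := Nat.sub_lt_self (pos_left_of_mem_headGap hδq) hkn.le
  set δ : ℝ := p / 2 ^ n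
  have hqθ : q + θ ≤ 2 ^ k * θ := not_lt.1 fun hlt => hmin k hkn q <|
    (mem_headGap_iff hθ).2 ⟨(div_lt_iff₀' (by positivity)).1 (hδq.1.trans hδθ), hlt⟩
  obtain ⟨-, hθp⟩ := (mem_headGap_iff hθ).1 h
  obtain ⟨hqδ, hδq⟩ := (mem_headGap_iff (by linarith)).1 hδq
  obtain ⟨i, rfl⟩ := Nat.exists_eq_add_of_le' hkn.le
  rw [Nat.add_sub_cancel] at hin
  have hi : (0 : ℝ) < 2 ^ i := by positivity
  rw [pow_add, mul_assoc] at hθp hδ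
  have hle : 2 ^ i * q ≤ p := by
    exact_mod_cast hδ ▸ mul_le_mul_of_nonneg_left hqδ.le hi.le
  obtain ⟨r, rfl⟩ := Nat.exists_eq_add_of_le hle
  push_cast at hθp hδ
  -- `θ` also avoids the interval of complementary level `i = n - k` and index `r = p - 2 ^ i * q`.
  have hθr : 2 ^ i * θ < r + θ := by linarith [mul_le_mul_of_nonneg_left hqθ hi.le]
  have hrθ : 2 ^ i * θ ≤ r :=
    not_lt.1 fun hlt => hmin i hin r ((mem_headGap_iff hθ).2 ⟨hlt, hθr⟩)
  have : 2 ^ i * δ < 2 ^ i * δ := calc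
    2 ^ i * δ < 2 ^ i * θ := mul_lt_mul_of_pos_left hδθ hi
    _ ≤ r := hrθ
    _ = 2 ^ i * (2 ^ k * δ - q) := by linarith
    _ < 2 ^ i * δ := mul_lt_mul_of_pos_left (by linarith) hi
  exact this.false

lemma headGap_left_mem_headXi (hθ : θ ≤ 1 / 2) (h : θ ∈ headGap n p)
    (hmin : ∀ k < n, ∀ q, θ ∉ headGap k q) : (p : ℝ) / 2 ^ n ∈ HeadXi := by
  have hp : (0 : ℝ) < p := Nat.cast_pos.2 (pos_right_of_mem_headGap h)
  have hδ : (p : ℝ) / 2 ^ n ≤ 1 / 2 := h.1.le.trans hθ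
  refine mem_headXi_iff.2 ⟨⟨by positivity, hδ⟩, fun k q => ?_⟩
  rcases lt_or_ge k n with hkn | hnk
  · exact headGap_left_notMem_headGap_of_lt (by linarith) h hmin hkn
  · exact headGap_left_notMem_headGap_of_le (by linarith) hnk

lemma exists_mem_headGap_endpoints_mem_headXi (hθ : θ ∈ Ioc 0 (1 / 2)) (hmem : θ ∉ HeadXi) :
    ∃ n p, θ ∈ headGap n p ∧ (p : ℝ) / 2 ^ n ∈ HeadXi ∧ (p : ℝ) / (2 ^ n - 1) ∈ HeadXi := by
  classical
  have hex : ∃ n p, θ ∈ headGap n p := by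
    by_contra! hall
    exact hmem (mem_headXi_iff.2 ⟨hθ, hall⟩)
  obtain ⟨p, h⟩ := Nat.find_spec hex
  have hmin : ∀ k < Nat.find hex, ∀ q, θ ∉ headGap k q := fun k hk q hq =>
    Nat.find_min hex hk ⟨q, hq⟩
  exact ⟨_, p, h, headGap_left_mem_headXi hθ.2 h hmin, headGap_right_mem_headXi hθ.2 h hmin⟩

end

/-- If `(β, α)` is a connected component of `(0, 1/2) ∖ Ξ`, then `α = p/(2ⁿ - 1)` and
`β = p/2ⁿ` for some integers `n ≥ 2`, `p ≥ 1`. -/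
theorem headXi_gap_endpoints (β α : ℝ) (hβ : β ∈ HeadXi ∪ {0}) (hα : α ∈ HeadXi)
    (hlt : β < α) (hgap : Set.Ioo β α ∩ HeadXi = ∅) :
    ∃ n p : ℕ, 2 ≤ n ∧ 1 ≤ p ∧
      α = (p : ℝ) / (2 ^ n - 1) ∧ β = (p : ℝ) / 2 ^ n := by
  have hβ0 : 0 ≤ β := hβ.elim (fun h => h.1.le) fun h => h.ge
  have hge : ∀ ξ ∈ HeadXi, β < ξ → α ≤ ξ := fun ξ hξ hβξ =>
    not_lt.1 fun hξα => (hgap.subset ⟨⟨hβξ, hξα⟩, hξ⟩ : ξ ∈ (∅ : Set ℝ))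
  obtain ⟨θ, hβθ, hθα⟩ := exists_between hlt
  have hθ : θ ≤ 1 / 2 := hθα.le.trans hα.2.1
  obtain ⟨n, p, h, hleft, hright⟩ := exists_mem_headGap_endpoints_mem_headXi
    ⟨hβ0.trans_lt hβθ, hθ⟩ fun hmem => (hge θ hmem hβθ).not_gt hθα
  refine ⟨n, p, two_le_of_mem_headGap h hθ, pos_right_of_mem_headGap h, ?_, ?_⟩
  · refine (hge _ hright (hβθ.trans h.2)).antisymm (not_lt.1 fun hlt' => ?_)
    exact (mem_headXi_iff.1 hα).2 n p ⟨h.1.trans hθα, hlt'⟩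
  · refine le_antisymm (not_lt.1 fun hlt' => ?_)
      (not_lt.1 fun hlt' => (hge _ hleft hlt').not_gt (h.1.trans hθα))
    rcases hβ with hβ | rfl
    · exact (mem_headXi_iff.1 hβ).2 n p ⟨hlt', hβθ.trans h.2⟩
    · exact hlt'.not_ge hleft.1.le
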